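/- For all natural numbers k ≥ 2 and n ≥ 0, there exists a play of the reversible pebble game on k^n nodes, consisting of at most (2k−1)^n legal moves, whose final configuration is exactly the singleton {k^n}, and in which every configuration of the play contains at most n·(k−1) + 1 pebbled nodes. -/

import Mathlib

/- Bennett's reversible pebble game on `t` nodes numbered `1, …, t`.
A configuration is a finite set `P` of pebbled node indices (a subset of
`{1, …, t}`).  A legal move toggles the pebbled status of exactly one node
`j` with `1 ≤ j ≤ t`, provided `j = 1` or node `j - 1` is pebbled. -/
def PebbleMove (t : ℕ) (P P' : Finset ℕ) : Prop :=
  ∃ j : ℕ, 1 ≤ j ∧ j ≤ t ∧ (j = 1 ∨ j - 1 ∈ P) ∧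
    P' = (if j ∈ P then P.erase j else insert j P)

/-- A play is a finite sequence of configurations beginning with the empty
configuration, each consecutive pair related by a legal move. -/
def PebblePlay (t : ℕ) (L : List (Finset ℕ)) : Prop :=
  L.head? = some ∅ ∧ L.Chain' (PebbleMove t)

inductive PReach (t c : ℕ) : ℕ → Finset ℕ → Finset ℕ → Prop
  | refl (P : Finset ℕ) (h : P.card ≤ c) : PReach t c 0 P P
  | step (s : ℕ) (P P' Q : Finset ℕ) (h : P.card ≤ c) (hm : PebbleMove t P P')
      (hr : PReach t c s P' Q) : PReach t c (s + 1) P Q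

theorem PebbleMove.symm' {t : ℕ} {P P' : Finset ℕ} (h : PebbleMove t P P') :
    PebbleMove t P' P := by
  obtain ⟨j, h1, h2, h3, rfl⟩ := h
  refine ⟨j, h1, h2, ?_, ?_⟩
  · rcases h3 with h3 | h3
    · exact Or.inl h3
    · right
      have : j - 1 ≠ j := by omega
      split_ifs <;> simp [this, h3]
  · by_cases hj : j ∈ P <;> simp [hj]

theorem PReach.trans' {t c s s' : ℕ} {P Q R : Finset ℕ} (h : PReach t c s P Q)
    (h' : PReach t c s' Q R) : PReach t c (s + s') P R := by
  induction h with
  | refl P h => simpa using h'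
  | step s P P' Q h hm hr ih =>
    have := PReach.step _ _ _ _ h hm (ih h')
    rwa [show s + 1 + s' = s + s' + 1 by omega]

theorem PReach.card_left {t c s : ℕ} {P Q : Finset ℕ} (h : PReach t c s P Q) : P.card ≤ c := by
  cases h <;> assumption

theorem PReach.symm' {t c s : ℕ} {P Q : Finset ℕ} (h : PReach t c s P Q) :
    PReach t c s Q P := by
  induction h with
  | refl P h => exact .refl P h
  | step s P P' Q h hm hr ih =>
    exact ih.trans' (.step 0 _ _ _ hr.card_left hm.symm' (.refl _ h))

theorem PReach.mono' {t c c' s : ℕ} {P Q : Finset ℕ} (h : PReach t c s P Q) (hc : c ≤ c') :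
    PReach t c' s P Q := by
  induction h with
  | refl P h => exact .refl P (h.trans hc)
  | step s P P' Q h hm hr ih => exact .step _ _ _ _ (h.trans hc) hm ih

theorem PReach.toList {t c s : ℕ} {P Q : Finset ℕ} (h : PReach t c s P Q) :
    ∃ L : List (Finset ℕ), L.head? = some P ∧ L.Chain' (PebbleMove t) ∧ L.length = s + 1 ∧
      L.getLast? = some Q ∧ ∀ R ∈ L, R.card ≤ c := by
  induction h with
  | refl P h => exact ⟨[P], by simp, by simp [List.Chain'], by simp, by simp, by simpa using h⟩
  | step s P P' Q h hm hr ih =>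
    obtain ⟨L, h1, h2, h3, h4, h5⟩ := ih
    cases L with
    | nil => simp at h1
    | cons a L =>
      simp only [List.head?_cons, Option.some.injEq] at h1
      subst h1
      refine ⟨P :: a :: L, by simp, ?_, by simpa using h3, ?_, ?_⟩
      · exact List.isChain_cons_cons.2 ⟨hm, h2⟩
      · rw [List.getLast?_cons_cons]; exact h4
      · intro R hR
        rcases List.mem_cons.1 hR with rfl | hR
        · exact h
        · exact h5 R hR

def pebF (C : Finset ℕ) (a m : ℕ) : ℕ → Finset ℕ
  | 0 => C
  | i + 1 => insert (a + (i + 1) * m) (pebF C a m i)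

theorem pebF_card (C : Finset ℕ) (a m i : ℕ) : (pebF C a m i).card ≤ C.card + i := by
  induction i with
  | zero => simp [pebF]
  | succ i ih =>
    have := Finset.card_insert_le (a + (i + 1) * m) (pebF C a m i)
    simp only [pebF]; omega

theorem pebF_mem (C : Finset ℕ) (a m i x : ℕ) (hx : x ∈ pebF C a m i) :
    x ∈ C ∨ x ≤ a + i * m := by
  induction i with
  | zero => exact Or.inl hx
  | succ i ih =>
    have e : (i + 1) * m = i * m + m := by ring
    simp only [pebF, Finset.mem_insert] at hx
    rcases hx with rfl | hx
    · right; exact le_rfl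
    · rcases ih hx with h | h
      · exact Or.inl h
      · right; omega

theorem pebF_last (C : Finset ℕ) (a m i : ℕ) (h : a = 0 ∨ a ∈ C) :
    a + i * m = 0 ∨ a + i * m ∈ pebF C a m i := by
  cases i with
  | zero => simpa [pebF] using h
  | succ i => right; simp [pebF]

theorem peb_main (t k : ℕ) (hk : 2 ≤ k) (n : ℕ) : ∀ (C : Finset ℕ) (a : ℕ), (a = 0 ∨ a ∈ C) →
    (∀ x ∈ C, x ≤ a ∨ a + k ^ n < x) → a + k ^ n ≤ t →
    PReach t (C.card + (n * (k - 1) + 1)) ((2 * k - 1) ^ n) C (insert (a + k ^ n) C) := by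
  induction n with
  | zero =>
    intro C a ha hC ht
    have hn : a + 1 ∉ C := fun h => by have := hC _ h; simp at this
    simp only [pow_zero] at *
    refine .step 0 _ _ _ (by omega) ⟨a + 1, by omega, ht, ?_, by simp [hn]⟩ (.refl _ ?_)
    · rcases ha with h | h
      · left; omega
      · right; simpa using h
    · rw [Finset.card_insert_of_notMem hn]; omega
  | succ n ih =>
    intro C a ha hC ht
    set m := k ^ n with hm
    have hmp : 0 < m := by positivity
    have ek : k ^ (n + 1) = k * m := by rw [pow_succ, mul_comm]
    rw [ek] at hC ht ⊢
    set c := C.card + ((n + 1) * (k - 1) + 1) with hc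
    have ec : c = C.card + (k - 1) + (n * (k - 1) + 1) := by rw [hc]; ring
    set M := (2 * k - 1) ^ n with hM
    have mul_i : ∀ i, i < k → i * m + m ≤ k * m := fun i hi => by
      have := Nat.mul_le_mul_right m (show i + 1 ≤ k from hi)
      linarith [Nat.succ_mul i m]
    have fwd : ∀ i, i ≤ k → PReach t c (i * M) C (pebF C a m i) := by
      intro i
      induction i with
      | zero => intro _; rw [zero_mul]; exact .refl _ (by omega)
      | succ i ihi =>
        intro hi
        have h1 := mul_i i hi
        have h := ih (pebF C a m i) (a + i * m) (pebF_last C a m i ha) (by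
          intro x hx
          rcases pebF_mem C a m i x hx with h | h
          · rcases hC x h with h | h <;> omega
          · exact Or.inl h) (by omega)
        have hcard := pebF_card C a m i
        rw [show a + i * m + m = a + (i + 1) * m by ring] at h
        rw [show (i + 1) * M = i * M + M by ring]
        exact (ihi (by omega)).trans' (h.mono' (by omega))
    have bwd : ∀ i, i ≤ k - 1 → PReach t c (i * M) (insert (a + k * m) C)
        (insert (a + k * m) (pebF C a m i)) := by
      intro i
      induction i with
      | zero =>
        intro _
        have := Finset.card_insert_le (a + k * m) C
        rw [zero_mul]; exact .refl _ (by omega)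
      | succ i ihi =>
        intro hi
        have h1 := mul_i (i + 1) (by omega)
        have e1 : (i + 1) * m = i * m + m := by ring
        have h := ih (insert (a + k * m) (pebF C a m i)) (a + i * m)
          ((pebF_last C a m i ha).imp_right (Finset.mem_insert_of_mem)) (by
          intro x hx
          rcases Finset.mem_insert.1 hx with rfl | hx
          · right; omega
          rcases pebF_mem C a m i x hx with h | h
          · rcases hC x h with h | h <;> omega
          · exact Or.inl h) (by omega)
        have hcard := pebF_card C a m i
        have hcard2 := Finset.card_insert_le (a + k * m) (pebF C a m i)
        rw [show a + i * m + m = a + (i + 1) * m by ring, Finset.insert_comm] at h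
        rw [show (i + 1) * M = i * M + M by ring]
        exact (ihi (by omega)).trans' (h.mono' (by omega))
    have hf := fwd k le_rfl
    have hb := (bwd (k - 1) le_rfl).symm'
    obtain ⟨l, rfl⟩ : ∃ l, k = l + 1 := ⟨k - 1, by omega⟩
    have := hf.trans' hb
    rwa [show (2 * (l + 1) - 1) ^ (n + 1) = (l + 1) * M + (l + 1 - 1) * M by
      rw [pow_succ, ← hM, show 2 * (l + 1) - 1 = 2 * l + 1 by omega]
      simp only [Nat.add_sub_cancel]; ring]

/-- Bennett's `k`-ary strategy: for `k ≥ 2` and any `n`, there is a play of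
the reversible pebble game on `k ^ n` nodes, consisting of at most
`(2k - 1) ^ n` legal moves (i.e., with at most `(2k - 1) ^ n + 1`
configurations), whose final configuration is exactly `{k ^ n}`, and in which
every configuration contains at most `n * (k - 1) + 1` pebbled nodes. -/
theorem bennett_k_ary_strategy (k n : ℕ) (hk : 2 ≤ k) :
    ∃ L : List (Finset ℕ), PebblePlay (k ^ n) L ∧
      L.length ≤ (2 * k - 1) ^ n + 1 ∧
      L.getLast? = some ({k ^ n} : Finset ℕ) ∧
      ∀ P ∈ L, P.card ≤ n * (k - 1) + 1 := by
  have h := peb_main (k ^ n) k hk n ∅ 0 (Or.inl rfl) (by simp) (by simp)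
  obtain ⟨L, h1, h2, h3, h4, h5⟩ := h.toList
  exact ⟨L, ⟨h1, h2⟩, h3.le, by simpa using h4, by simpa using h5⟩
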